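/- For every T ∈ 𝒟, the set ℐ(T) is a computability predicate. -/

import Mathlib

set_option maxHeartbeats 1000000

/-! # Terms of λΠ/R (de Bruijn representation) -/

inductive Trm (F : Type) : Type
  | type : Trm F
  | kind : Trm F
  | var : ℕ → Trm F
  | sym : F → Trm F
  | pi : Trm F → Trm F → Trm F
  | app : Trm F → Trm F → Trm F
  | lam : Trm F → Trm F → Trm F

namespace Trm

variable {F : Type}

/-- Lifting of a renaming under a binder. -/
def upRen (ρ : ℕ → ℕ) : ℕ → ℕ
  | 0 => 0
  | n + 1 => ρ n + 1

/-- Renaming of (de Bruijn) variables. -/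
def rename (ρ : ℕ → ℕ) : Trm F → Trm F
  | .type => .type
  | .kind => .kind
  | .var n => .var (ρ n)
  | .sym f => .sym f
  | .pi A B => .pi (rename ρ A) (rename (upRen ρ) B)
  | .app t u => .app (rename ρ t) (rename ρ u)
  | .lam A b => .lam (rename ρ A) (rename (upRen ρ) b)

/-- Lifting of a substitution under a binder. -/
def up (σ : ℕ → Trm F) : ℕ → Trm F
  | 0 => .var 0
  | n + 1 => rename Nat.succ (σ n)

/-- Capture-avoiding (parallel) substitution. -/
def subst (σ : ℕ → Trm F) : Trm F → Trm F
  | .type => .type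
  | .kind => .kind
  | .var n => σ n
  | .sym f => .sym f
  | .pi A B => .pi (subst σ A) (subst (up σ) B)
  | .app t u => .app (subst σ t) (subst σ u)
  | .lam A b => .lam (subst σ A) (subst (up σ) b)

/-- Cons of a term on a substitution: `scons a σ` maps `0` to `a` and `n+1` to `σ n`. -/
def scons (a : Trm F) (σ : ℕ → Trm F) : ℕ → Trm F
  | 0 => a
  | n + 1 => σ n

/-- Substitution of the first free variable: `t[x ↦ a]`. -/
def subst1 (a t : Trm F) : Trm F := subst (scons a .var) t

/-- Shifting of all free variables. -/
def shift : Trm F → Trm F := rename Nat.succ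

/-- Application of a head term to a list of arguments: `appList h [t1,…,tn] = h t1 … tn`. -/
def appList (h : Trm F) : List (Trm F) → Trm F
  | [] => h
  | a :: as => appList (.app h a) as

/-- Free (de Bruijn) variables of a term. -/
def FV : Trm F → Set ℕ
  | .type => ∅
  | .kind => ∅
  | .var n => {n}
  | .sym _ => ∅
  | .pi A B => FV A ∪ {n | n + 1 ∈ FV B}
  | .app t u => FV t ∪ FV u
  | .lam A b => FV A ∪ {n | n + 1 ∈ FV b}

/-- The class 𝕂 of kinds: `K = TYPE | Πx:t.K`. -/
def IsKind : Trm F → Prop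
  | .type => True
  | .pi _ B => IsKind B
  | _ => False

/-- Sorts: `TYPE` and `KIND`. -/
def IsSort (s : Trm F) : Prop := s = .type ∨ s = .kind

/-- The product arity of a term: the number of leading products. -/
def piArity : Trm F → ℕ
  | .pi _ B => piArity B + 1
  | _ => 0

/-- Strip `n` leading products. -/
def piCodN : ℕ → Trm F → Trm F
  | 0, T => T
  | n + 1, .pi _ B => piCodN n B
  | _ + 1, T => T

/-- The first `n` domains of the leading products, as a de Bruijn context
(type of variable `0` first, i.e. innermost first). -/
def teleN : ℕ → Trm F → List (Trm F)
  | 0, _ => []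
  | n + 1, .pi A B => teleN n B ++ [A]
  | _ + 1, _ => []

/-- The full telescope of leading products, as a de Bruijn context. -/
def telescope (T : Trm F) : List (Trm F) := teleN (piArity T) T

/-- The domains of the leading products, outermost first. -/
def piDoms : Trm F → List (Trm F)
  | .pi A B => A :: piDoms B
  | _ => []

end Trm

/-- The subterm relation (reflexive and transitive). -/
inductive Subterm {F : Type} : Trm F → Trm F → Prop
  | refl (t : Trm F) : Subterm t t
  | piL {t A B} : Subterm t A → Subterm t (.pi A B)
  | piR {t A B} : Subterm t B → Subterm t (.pi A B)
  | appL {t u v} : Subterm t u → Subterm t (.app u v)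
  | appR {t u v} : Subterm t v → Subterm t (.app u v)
  | lamL {t A b} : Subterm t A → Subterm t (.lam A b)
  | lamR {t A b} : Subterm t b → Subterm t (.lam A b)

/-! # Rewriting -/

/-- A set of rewriting rules `l → r`. -/
abbrev Rules (F : Type) := Set (Trm F × Trm F)

/-- `R` is a rewriting system: for every rule `l → r`, `FV(r) ⊆ FV(l)` and
`l` is of the form `f l⃗`. -/
def IsRewriteSystem {F : Type} (R : Rules F) : Prop :=
  ∀ p ∈ R, Trm.FV p.2 ⊆ Trm.FV p.1 ∧ ∃ (f : F) (ls : List (Trm F)), p.1 = Trm.appList (.sym f) ls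

/-- A symbol is defined if it heads the left-hand side of some rule. -/
def Defined {F : Type} (R : Rules F) (f : F) : Prop :=
  ∃ (ls : List (Trm F)) (r : Trm F), (Trm.appList (.sym f) ls, r) ∈ R

/-- One-step reduction `→ = →β ∪ →R`: β-reduction together with the closure of the
rules of `R` by substitution and context. -/
inductive Red {F : Type} (R : Rules F) : Trm F → Trm F → Prop
  | beta (A b a : Trm F) : Red R (.app (.lam A b) a) (Trm.subst1 a b)
  | rule {l r : Trm F} (σ : ℕ → Trm F) : (l, r) ∈ R → Red R (Trm.subst σ l) (Trm.subst σ r)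
  | appL {t t' u} : Red R t t' → Red R (.app t u) (.app t' u)
  | appR {t u u'} : Red R u u' → Red R (.app t u) (.app t u')
  | piL {A A' B} : Red R A A' → Red R (.pi A B) (.pi A' B)
  | piR {A B B'} : Red R B B' → Red R (.pi A B) (.pi A B')
  | lamL {A A' b} : Red R A A' → Red R (.lam A b) (.lam A' b)
  | lamR {A b b'} : Red R b b' → Red R (.lam A b) (.lam A b')

/-- Multi-step reduction `→*`. -/
def RedStar {F : Type} (R : Rules F) : Trm F → Trm F → Prop := Relation.ReflTransGen (Red R)

/-- Joinability `↓`. -/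
def Joinable {F : Type} (R : Rules F) (t u : Trm F) : Prop :=
  ∃ v, RedStar R t v ∧ RedStar R u v

/-- Local confluence: `← · → ⊆ →* · *←`. -/
def LocallyConfluent {F : Type} (R : Rules F) : Prop :=
  ∀ t u v, Red R t u → Red R t v → Joinable R u v

/-- `t` is strongly normalizing (terminating): no infinite reduction sequence from `t`. -/
def SN {F : Type} (R : Rules F) (t : Trm F) : Prop := Acc (fun a b => Red R b a) t

/-- The set of strongly normalizing terms. -/
def SNset {F : Type} (R : Rules F) : Set (Trm F) := {t | SN R t}

/-- `t` is in normal form. -/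
def NormalForm {F : Type} (R : Rules F) (t : Trm F) : Prop := ∀ u, ¬ Red R t u

/-- Neutral terms: `(λx:A.t)u v⃗`, `x v⃗`, or `f v⃗` where every rule `f l⃗ → r ∈ R`
satisfies `|l⃗| ≤ |v⃗|`. -/
def Neutral {F : Type} (R : Rules F) (t : Trm F) : Prop :=
  (∃ (A b a : Trm F) (vs : List (Trm F)), t = Trm.appList (.app (.lam A b) a) vs) ∨
  (∃ (x : ℕ) (vs : List (Trm F)), t = Trm.appList (.var x) vs) ∨
  (∃ (f : F) (vs : List (Trm F)), t = Trm.appList (.sym f) vs ∧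
    ∀ (ls : List (Trm F)) (r : Trm F), (Trm.appList (.sym f) ls, r) ∈ R → ls.length ≤ vs.length)

/-- Computability predicates: `S ⊆ SN`, `S` is closed under reduction, and `S` contains
every neutral term all of whose one-step reducts are in `S`. -/
def IsCompPred {F : Type} (R : Rules F) (S : Set (Trm F)) : Prop :=
  S ⊆ SNset R ∧ (∀ t ∈ S, ∀ u, Red R t u → u ∈ S) ∧
  (∀ t, Neutral R t → (∀ u, Red R t u → u ∈ S) → t ∈ S)

/-! # Typing: λP extended with function symbols and conversion modulo `→` -/

/-- The typing rules of λΠ/R: the rules of λP (in de Bruijn presentation) with the extra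
rule (fun) `⊢ f : Θ_f` and conversion up to joinability for `→`. -/
inductive Typing {F : Type} (R : Rules F) (Θ sΘ : F → Trm F) :
    List (Trm F) → Trm F → Trm F → Prop
  | ax : Typing R Θ sΘ [] .type .kind
  | var {Γ A s} : Trm.IsSort s → Typing R Θ sΘ Γ A s →
      Typing R Θ sΘ (A :: Γ) (.var 0) (Trm.shift A)
  | weak {Γ A s b B} : Trm.IsSort s → Typing R Θ sΘ Γ A s → Typing R Θ sΘ Γ b B →
      Typing R Θ sΘ (A :: Γ) (Trm.shift b) (Trm.shift B)
  | prod {Γ A B s} : Trm.IsSort s → Typing R Θ sΘ Γ A .type → Typing R Θ sΘ (A :: Γ) B s →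
      Typing R Θ sΘ Γ (.pi A B) s
  | abs {Γ A b B s} : Trm.IsSort s → Typing R Θ sΘ (A :: Γ) b B →
      Typing R Θ sΘ Γ (.pi A B) s → Typing R Θ sΘ Γ (.lam A b) (.pi A B)
  | app {Γ t a A B} : Typing R Θ sΘ Γ t (.pi A B) → Typing R Θ sΘ Γ a A →
      Typing R Θ sΘ Γ (.app t a) (Trm.subst1 a B)
  | conv {Γ a A B s} : Typing R Θ sΘ Γ a A → Joinable R A B → Typing R Θ sΘ Γ B s →
      Trm.IsSort s → Typing R Θ sΘ Γ a B
  | symb (f : F) : Trm.IsSort (sΘ f) → Typing R Θ sΘ [] (Θ f) (sΘ f) →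
      Typing R Θ sΘ [] (.sym f) (Θ f)

/-- `→` preserves typing (subject reduction). -/
def PresTyping {F : Type} (R : Rules F) (Θ sΘ : F → Trm F) : Prop :=
  ∀ Γ t u T, Typing R Θ sΘ Γ t T → Red R t u → Typing R Θ sΘ Γ u T

/-- A substitution `γ` is well-typed from `Δ` to `Γ` (for a generic typing judgment `Ty`):
for all `(x : T) ∈ Δ`, `Ty Γ (xγ) (Tγ)`. -/
def SubstTyped {F : Type} (Ty : List (Trm F) → Trm F → Trm F → Prop)
    (Γ : List (Trm F)) (γ : ℕ → Trm F) (Δ : List (Trm F)) : Prop :=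
  ∀ i A, Δ[i]? = some A → Ty Γ (γ i) (Trm.subst (fun j => γ (j + i + 1)) A)

/-! # Interpretation of types as computability predicates -/

/-- `𝕀`: partial functions from terms to sets of terms. -/
abbrev Interp (F : Type) := Trm F → Part (Set (Trm F))

/-- Graph inclusion of partial functions. -/
def InterpLE {F : Type} (I J : Interp F) : Prop := ∀ T S, S ∈ I T → S ∈ J T

/-- `I` is the least fixpoint of `φ` on `𝕀` (ordered by graph inclusion). -/
def IsLfpInterp {F : Type} (φ : Interp F → Interp F) (I : Interp F) : Prop :=
  φ I = I ∧ ∀ J, φ J = J → InterpLE I J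

/-- The domain `D(I)`: terminating terms `T` such that whenever `T →* Πx:A.B`,
`A ∈ dom(I)` and `B[x↦a] ∈ dom(I)` for all `a ∈ I(A)`. -/
def domD {F : Type} (R : Rules F) (I : Interp F) : Set (Trm F) :=
  {T | SN R T ∧ ∀ A B, RedStar R T (.pi A B) →
    (I A).Dom ∧ ∀ S ∈ I A, ∀ a ∈ S, (I (Trm.subst1 a B)).Dom}

/-- `{t | ∀ a ∈ I(A), t a ∈ I(B[x↦a])}` (relational reading of the partial function `I`). -/
def piPart {F : Type} (I : Interp F) (A B : Trm F) : Set (Trm F) :=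
  {t | ∀ S ∈ I A, ∀ a ∈ S, ∀ S' ∈ I (Trm.subst1 a B), Trm.app t a ∈ S'}

open Classical in
/-- The monotone function `F : 𝕀 → 𝕀`: `dom(F(I)) = D(I)`; `F(I)(T) = SN` if the normal
form of `T` is not a product; `F(I)(T) = {t | ∀ a ∈ I(A), t a ∈ I(B[x↦a])}` if the normal
form of `T` is `Πx:A.B`. -/
noncomputable def interpF {F : Type} (R : Rules F) (I : Interp F) : Interp F := fun T =>
  ⟨T ∈ domD R I, fun _ =>
    if h : ∃ A B, RedStar R T (.pi A B) ∧ NormalForm R (.pi A B) then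
      piPart I h.choose h.choose_spec.choose
    else SNset R⟩

/-- The value of a partial interpretation at `T` (as a set). -/
def partMem {F : Type} (I : Interp F) (T : Trm F) : Set (Trm F) := {t | ∀ S ∈ I T, t ∈ S}

open Classical in
/-- The interpretation `⟦T⟧σ` of a term `T` wrt a substitution `σ`, relative to the least
fixpoint `I = ℐ` of `interpF`: `⟦s⟧σ = 𝒟` for `s` a sort;
`⟦Πx:A.K⟧σ = {t | ∀ a ∈ ⟦A⟧σ, t a ∈ ⟦K⟧[x↦a,σ]}` for `K` a kind;
`⟦T⟧σ = ℐ(Tσ)` if `T` is neither a kind nor `KIND` and `Tσ ∈ 𝒟`; `⟦T⟧σ = SN` otherwise. -/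
noncomputable def interp {F : Type} (R : Rules F) (I : Interp F) :
    Trm F → (ℕ → Trm F) → Set (Trm F)
  | .type, _ => domD R I
  | .kind, _ => domD R I
  | .pi A B, σ =>
      if Trm.IsKind B then
        {t | ∀ a ∈ interp R I A σ, Trm.app t a ∈ interp R I B (Trm.scons a σ)}
      else if Trm.subst σ (.pi A B) ∈ domD R I then partMem I (Trm.subst σ (.pi A B))
      else SNset R
  | .var n, σ =>
      if Trm.subst σ (.var n) ∈ domD R I then partMem I (Trm.subst σ (.var n)) else SNset R
  | .sym g, σ =>
      if Trm.subst σ (.sym g) ∈ domD R I then partMem I (Trm.subst σ (.sym g)) else SNset R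
  | .app t u, σ =>
      if Trm.subst σ (.app t u) ∈ domD R I then partMem I (Trm.subst σ (.app t u)) else SNset R
  | .lam A b, σ =>
      if Trm.subst σ (.lam A b) ∈ domD R I then partMem I (Trm.subst σ (.lam A b)) else SNset R

/-- `σ ⊨ Γ`: a substitution is adequate wrt an environment. -/
def Models {F : Type} (R : Rules F) (I : Interp F) (σ : ℕ → Trm F) (Γ : List (Trm F)) : Prop :=
  ∀ i A, Γ[i]? = some A → σ i ∈ interp R I A (fun j => σ (j + i + 1))

/-- The typing map `Θ` is adequate: `f ∈ ⟦Θ_f⟧` whenever `⊢ Θ_f : s_f` and `Θ_f ∈ ⟦s_f⟧`. -/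
def Adequate {F : Type} (R : Rules F) (Θ sΘ : F → Trm F) (I : Interp F) : Prop :=
  ∀ f : F, Typing R Θ sΘ [] (Θ f) (sΘ f) → Θ f ∈ interp R I (sΘ f) Trm.var →
    Trm.sym f ∈ interp R I (Θ f) Trm.var

/-- The substitution `[x⃗ ↦ l⃗]` (where `ls` lists the images of variables `0, 1, …`). -/
def mkSubst {F : Type} (ls : List (Trm F)) : ℕ → Trm F := fun i =>
  (ls[i]?).getD (.var (i - ls.length))

/-- Composition of substitutions: `x ↦ (xγ)σ`. -/
def compSubst {F : Type} (γ σ : ℕ → Trm F) : ℕ → Trm F := fun i => Trm.subst σ (γ i)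

/-- The set `ℂ` of terms `f t⃗` with `|t⃗| = arit(Θ_f)`, `⊢ Θ_f : s_f`, `Θ_f ∈ ⟦s_f⟧` and
`[x⃗↦t⃗] ⊨ Γ_f`. -/
def CC {F : Type} (R : Rules F) (Θ sΘ : F → Trm F) (I : Interp F) : Set (Trm F) :=
  {t | ∃ (f : F) (ts : List (Trm F)), t = Trm.appList (.sym f) ts ∧
    ts.length = Trm.piArity (Θ f) ∧
    Typing R Θ sΘ [] (Θ f) (sΘ f) ∧ Θ f ∈ interp R I (sΘ f) Trm.var ∧
    Models R I (mkSubst ts.reverse) (Trm.telescope (Θ f))}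

/-! # Dependency pairs -/

/-- Occurrences of `p` in a term, not at the root, such that `p` is not further applied
(i.e. `p` collects all the arguments of its head at this occurrence). -/
inductive MaxOccNR {F : Type} (p : Trm F) : Trm F → Prop
  | appL {u v} : MaxOccNR p u → MaxOccNR p (.app u v)
  | appR {u v} : MaxOccNR p v → MaxOccNR p (.app u v)
  | appRroot {u} : MaxOccNR p (.app u p)
  | piL {A B} : MaxOccNR p A → MaxOccNR p (.pi A B)
  | piLroot {B} : MaxOccNR p (.pi p B)
  | piR {A B} : MaxOccNR p B → MaxOccNR p (.pi A B)
  | piRroot {A} : MaxOccNR p (.pi A p)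
  | lamL {A b} : MaxOccNR p A → MaxOccNR p (.lam A b)
  | lamLroot {b} : MaxOccNR p (.lam p b)
  | lamR {A b} : MaxOccNR p b → MaxOccNR p (.lam A b)
  | lamRroot {A} : MaxOccNR p (.lam A p)

/-- `p` occurs in `t` as a maximal application. -/
def MaxOcc {F : Type} (p t : Trm F) : Prop := t = p ∨ MaxOccNR p t

/-- Dependency pairs: `f l⃗ > g m⃗` iff there is a rule `f l⃗ → r ∈ R`, `g` is defined and
`g m⃗` is a subterm of `r` such that `m⃗` are all the arguments to which `g` is applied. -/
def DepPair {F : Type} (R : Rules F) (f : F) (ls : List (Trm F)) (g : F)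
    (ms : List (Trm F)) : Prop :=
  Defined R g ∧ ∃ r, (Trm.appList (.sym f) ls, r) ∈ R ∧ MaxOcc (Trm.appList (.sym g) ms) r

/-- `f t⃗ →arg f u⃗`: reduction of exactly one argument. -/
def ArgRed {F : Type} (R : Rules F) (t u : Trm F) : Prop :=
  ∃ (f : F) (pre post : List (Trm F)) (a b : Trm F), Red R a b ∧
    t = Trm.appList (.sym f) (pre ++ a :: post) ∧ u = Trm.appList (.sym f) (pre ++ b :: post)

/-- `>ₛ`: the closure of the dependency pair relation by substitution and left-application:
`f t₁…t_p >ₛ g u₁…u_q` iff there are a dependency pair `f l₁…l_i > g m₁…m_j` with `i ≤ p`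
and `j ≤ q` and a substitution `σ` such that `t_k →* l_kσ` for `k ≤ i` and `m_kσ = u_k`
for `k ≤ j`. -/
def GTsub {F : Type} (R : Rules F) (t u : Trm F) : Prop :=
  ∃ (f g : F) (ts us ls ms : List (Trm F)) (σ : ℕ → Trm F),
    t = Trm.appList (.sym f) ts ∧ u = Trm.appList (.sym g) us ∧
    DepPair R f ls g ms ∧ ls.length ≤ ts.length ∧ ms.length ≤ us.length ∧
    (∀ (k : ℕ) (tk lk : Trm F), ts[k]? = some tk → ls[k]? = some lk → RedStar R tk (Trm.subst σ lk)) ∧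
    (∀ (k : ℕ) (mk : Trm F), ms[k]? = some mk → us[k]? = some (Trm.subst σ mk))

/-- The call relation `≻̃ = →arg* · >ₛ` on `ℂ`. -/
def CallRel {F : Type} (R : Rules F) (Θ sΘ : F → Trm F) (I : Interp F) (t u : Trm F) : Prop :=
  t ∈ CC R Θ sΘ I ∧ u ∈ CC R Θ sΘ I ∧
    ∃ v, Relation.ReflTransGen (ArgRed R) t v ∧ GTsub R v u

/-! # Precedence and well-structured systems -/

/-- `f ⪰ g` (one step): `g` occurs in `Θ_f` or in the right-hand side of a rule of `f`. -/
def PrecBase {F : Type} (R : Rules F) (Θ : F → Trm F) (f g : F) : Prop :=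
  Subterm (.sym g) (Θ f) ∨
  ∃ (ls : List (Trm F)) (r : Trm F), (Trm.appList (.sym f) ls, r) ∈ R ∧ Subterm (.sym g) r

/-- `⪰`: the smallest quasi-order containing `PrecBase`. -/
def Preceq {F : Type} (R : Rules F) (Θ : F → Trm F) : F → F → Prop :=
  Relation.ReflTransGen (PrecBase R Θ)

/-- `≻`: the strict part of `⪰`. -/
def Prec {F : Type} (R : Rules F) (Θ : F → Trm F) (f g : F) : Prop :=
  Preceq R Θ f g ∧ ¬ Preceq R Θ g f

/-- The restricted type system `⊢_{≺ f}`: as `Typing`, but function symbols may only be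
introduced when strictly smaller than `f` in the precedence. -/
inductive LTyp {F : Type} (R : Rules F) (Θ sΘ : F → Trm F) (f : F) :
    List (Trm F) → Trm F → Trm F → Prop
  | ax : LTyp R Θ sΘ f [] .type .kind
  | var {Γ A s} : Trm.IsSort s → LTyp R Θ sΘ f Γ A s →
      LTyp R Θ sΘ f (A :: Γ) (.var 0) (Trm.shift A)
  | weak {Γ A s b B} : Trm.IsSort s → LTyp R Θ sΘ f Γ A s → LTyp R Θ sΘ f Γ b B →
      LTyp R Θ sΘ f (A :: Γ) (Trm.shift b) (Trm.shift B)
  | prod {Γ A B s} : Trm.IsSort s → LTyp R Θ sΘ f Γ A .type → LTyp R Θ sΘ f (A :: Γ) B s →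
      LTyp R Θ sΘ f Γ (.pi A B) s
  | abs {Γ A b B s} : Trm.IsSort s → LTyp R Θ sΘ f (A :: Γ) b B →
      LTyp R Θ sΘ f Γ (.pi A B) s → LTyp R Θ sΘ f Γ (.lam A b) (.pi A B)
  | app {Γ t a A B} : LTyp R Θ sΘ f Γ t (.pi A B) → LTyp R Θ sΘ f Γ a A →
      LTyp R Θ sΘ f Γ (.app t a) (Trm.subst1 a B)
  | conv {Γ a A B s} : LTyp R Θ sΘ f Γ a A → Joinable R A B → LTyp R Θ sΘ f Γ B s →
      Trm.IsSort s → LTyp R Θ sΘ f Γ a B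
  | symb (g : F) : Prec R Θ f g → Trm.IsSort (sΘ g) → LTyp R Θ sΘ f [] (Θ g) (sΘ g) →
      LTyp R Θ sΘ f [] (.sym g) (Θ g)

/-- The arguments `y⃗γ = [y₁γ, …, y_jγ]` of an instantiated dependency pair right-hand
side, where `y_j` is de Bruijn variable `0`. -/
def dpArgs {F : Type} (γ : ℕ → Trm F) (j : ℕ) : List (Trm F) :=
  (List.range j).reverse.map γ

/-- The restricted type system `⊢_{f l⃗}` (computability closure): as `Typing`, except that
types are required to be typable using symbols smaller than `f` only, and function symbols
are introduced either as undefined constants or through instances of dependency pairs of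
`f l⃗`. -/
inductive RTyp {F : Type} (R : Rules F) (Θ sΘ : F → Trm F) (f : F) (ls : List (Trm F)) :
    List (Trm F) → Trm F → Trm F → Prop
  | ax : RTyp R Θ sΘ f ls [] .type .kind
  | var {Γ A s} : Trm.IsSort s → LTyp R Θ sΘ f Γ A s →
      RTyp R Θ sΘ f ls (A :: Γ) (.var 0) (Trm.shift A)
  | weak {Γ A s b B} : Trm.IsSort s → LTyp R Θ sΘ f Γ A s → RTyp R Θ sΘ f ls Γ b B →
      RTyp R Θ sΘ f ls (A :: Γ) (Trm.shift b) (Trm.shift B)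
  | prod {Γ A B s} : Trm.IsSort s → RTyp R Θ sΘ f ls Γ A .type →
      RTyp R Θ sΘ f ls (A :: Γ) B s → RTyp R Θ sΘ f ls Γ (.pi A B) s
  | abs {Γ A b B s} : Trm.IsSort s → RTyp R Θ sΘ f ls (A :: Γ) b B →
      LTyp R Θ sΘ f Γ (.pi A B) s → RTyp R Θ sΘ f ls Γ (.lam A b) (.pi A B)
  | app {Γ t a A B s} : Trm.IsSort s → RTyp R Θ sΘ f ls Γ t (.pi A B) →
      RTyp R Θ sΘ f ls Γ a A → LTyp R Θ sΘ f Γ (.pi A B) s →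
      RTyp R Θ sΘ f ls Γ (.app t a) (Trm.subst1 a B)
  | conv {Γ a A B s s'} : Trm.IsSort s → Trm.IsSort s' → RTyp R Θ sΘ f ls Γ a A →
      Joinable R A B → LTyp R Θ sΘ f Γ B s → LTyp R Θ sΘ f Γ A s' →
      RTyp R Θ sΘ f ls Γ a B
  | dp {Γ : List (Trm F)} (g : F) (γ : ℕ → Trm F) (j : ℕ) :
      j ≤ Trm.piArity (Θ g) → Trm.IsSort (sΘ g) → LTyp R Θ sΘ f [] (Θ g) (sΘ g) →
      (∀ i A, (Trm.teleN j (Θ g))[i]? = some A →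
        RTyp R Θ sΘ f ls Γ (γ i) (Trm.subst (fun k => γ (k + i + 1)) A)) →
      DepPair R f ls g (dpArgs γ j) →
      RTyp R Θ sΘ f ls Γ (Trm.appList (.sym g) (dpArgs γ j)) (Trm.subst γ (Trm.piCodN j (Θ g)))
  | const (g : F) : ¬ Defined R g → Trm.IsSort (sΘ g) → LTyp R Θ sΘ f [] (Θ g) (sΘ g) →
      RTyp R Θ sΘ f ls [] (.sym g) (Θ g)

/-- `R` is well-structured (wrt the assignment `Δ` of an environment to every rule):
(a) `≻` is well-founded; (b) `|l⃗| ≤ arit(Θ_f)` for every rule `f l⃗ → r`;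
(c) `|m⃗| ≤ arit(Θ_g)` for every dependency pair `f l⃗ > g m⃗`;
(d) `Δ_{f l⃗→r} ⊢_{f l⃗} r : U[x⃗↦l⃗]` for every rule `f l⃗ → r`, where `Θ_f = Πx⃗:T⃗.U`. -/
def WellStructured {F : Type} (R : Rules F) (Θ sΘ : F → Trm F)
    (Δ : Trm F → Trm F → List (Trm F)) : Prop :=
  WellFounded (fun g f => Prec R Θ f g) ∧
  (∀ l r, (l, r) ∈ R → ∀ (f : F) ls, l = Trm.appList (.sym f) ls →
    ls.length ≤ Trm.piArity (Θ f)) ∧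
  (∀ (f : F) ls (g : F) ms, DepPair R f ls g ms → ms.length ≤ Trm.piArity (Θ g)) ∧
  (∀ l r, (l, r) ∈ R → ∀ (f : F) ls, l = Trm.appList (.sym f) ls →
    RTyp R Θ sΘ f ls (Δ l r) r (Trm.subst (mkSubst ls.reverse) (Trm.piCodN ls.length (Θ f))))

/-- `R` is accessible: for every rule `f l⃗ → r` with `Θ_f = Πx⃗:T⃗.U`, `|x⃗| = |l⃗|`, and
every substitution `σ`, `σ ⊨ Δ_{f l⃗→r}` whenever `⊢ Θ_f : s_f`, `Θ_f ∈ ⟦s_f⟧` and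
`[x⃗↦l⃗]σ ⊨ x⃗:T⃗`. -/
def Accessible {F : Type} (R : Rules F) (Θ sΘ : F → Trm F) (I : Interp F)
    (Δ : Trm F → Trm F → List (Trm F)) : Prop :=
  ∀ l r, (l, r) ∈ R → ∀ (f : F) ls, l = Trm.appList (.sym f) ls → ∀ σ : ℕ → Trm F,
    Typing R Θ sΘ [] (Θ f) (sΘ f) → Θ f ∈ interp R I (sΘ f) Trm.var →
    Models R I (compSubst (mkSubst ls.reverse) σ) (Trm.teleN ls.length (Θ f)) →
    Models R I σ (Δ l r)

/-- A term in `𝕂 ∪ {KIND}`. -/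
def IsKindLike {F : Type} (t : Trm F) : Prop := Trm.IsKind t ∨ t = .kind

/-- `R` is plain function-passing (PFP): for every rule `f l⃗ → r` with `Θ_f = Πx⃗:T⃗.U` and
`|x⃗| = |l⃗|`, no `l_i` is a kind or `KIND`, and every `(y : T) ∈ Δ_{f l⃗→r}` satisfies:
either there is `i` with `y = l_i` and `T = T_i[x⃗↦l⃗]`, or `y ∈ FV(l_i)` and `T = D t⃗`
with `D` undefined and `|t⃗| = arit(Θ_D)`. -/
def PFP {F : Type} (R : Rules F) (Θ : F → Trm F) (Δ : Trm F → Trm F → List (Trm F)) : Prop :=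
  ∀ l r, (l, r) ∈ R → ∀ (f : F) ls, l = Trm.appList (.sym f) ls →
    (∀ li ∈ ls, ¬ IsKindLike li) ∧
    (∀ i A, (Δ l r)[i]? = some A →
      (∃ (k : ℕ) (Tk : Trm F), ls[k]? = some (Trm.var i) ∧ (Trm.piDoms (Θ f))[k]? = some Tk ∧
        Trm.rename (fun j => j + i + 1) A = Trm.subst (mkSubst ((ls.take k).reverse)) Tk) ∨
      ((∃ (k : ℕ) (lk : Trm F), ls[k]? = some lk ∧ i ∈ Trm.FV lk) ∧
        ∃ (D : F) (ts : List (Trm F)), Trm.rename (fun j => j + i + 1) A =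
          Trm.appList (.sym D) ts ∧ ¬ Defined R D ∧ ts.length = Trm.piArity (Θ D)))

/-! # Size-change termination -/

/-- Entries of size-change matrices: `−1`, `0` or `∞`. -/
inductive SCTe : Type
  | minusOne : SCTe
  | zero : SCTe
  | infty : SCTe
deriving DecidableEq

/-- Min-plus multiplication of entries (addition, truncated at `−1`). -/
def SCTe.comp : SCTe → SCTe → SCTe
  | .infty, _ => .infty
  | _, .infty => .infty
  | .minusOne, _ => .minusOne
  | _, .minusOne => .minusOne
  | .zero, .zero => .zero

/-- Minimum of entries (`−1 < 0 < ∞`). -/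
def SCTe.min : SCTe → SCTe → SCTe
  | .minusOne, _ => .minusOne
  | _, .minusOne => .minusOne
  | .zero, _ => .zero
  | .infty, x => x

/-- Base of the relation `⊵`: `f t₁…t_n ⊵ t_i` for `f ∈ F`. -/
def ArgSubBase {F : Type} (t u : Trm F) : Prop :=
  ∃ (f : F) (ts : List (Trm F)), t = Trm.appList (.sym f) ts ∧ u ∈ ts

/-- `⊵`: the smallest transitive relation such that `f t₁…t_n ⊵ t_i` for `f ∈ F`. -/
def ArgGT {F : Type} : Trm F → Trm F → Prop := Relation.TransGen ArgSubBase

open Classical in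
/-- The size-change matrix of a dependency pair `f l₁…l_p > g m₁…m_q`:
`a_{ij} = −1` if `l_i ⊵ m_j`, `a_{ij} = 0` if `l_i = m_j`, `a_{ij} = ∞` otherwise
(in particular if `i > p` or `j > q`). -/
noncomputable def dpMatrix {F : Type} (ls ms : List (Trm F)) : ℕ → ℕ → SCTe := fun i j =>
  match ls[i]?, ms[j]? with
  | some li, some mj =>
      if ArgGT li mj then .minusOne else if li = mj then .zero else .infty
  | _, _ => .infty

/-- Min-plus product of matrices, the middle dimension being `d`. -/
def matComp (d : ℕ) (M N : ℕ → ℕ → SCTe) : ℕ → ℕ → SCTe := fun i j =>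
  ((List.range d).map fun k => (M i k).comp (N k j)).foldr SCTe.min .infty

/-- The transitive closure of the call graph of `R`: edges are labeled by the matrices of
the dependency pairs, multiplied in the min-plus semiring along paths. -/
inductive TCEdge {F : Type} (R : Rules F) (Θ : F → Trm F) : F → F → (ℕ → ℕ → SCTe) → Prop
  | base {f g : F} {ls ms : List (Trm F)} : DepPair R f ls g ms →
      TCEdge R Θ f g (dpMatrix ls ms)
  | comp {f g h : F} {M N : ℕ → ℕ → SCTe} : TCEdge R Θ f g M → TCEdge R Θ g h N →
      TCEdge R Θ f h (matComp (Trm.piArity (Θ g)) M N)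

/-- `R` is size-change terminating: in the transitive closure of the call graph, every
idempotent matrix labeling a loop has some `−1` on its diagonal. -/
def SCT {F : Type} (R : Rules F) (Θ : F → Trm F) : Prop :=
  ∀ (f : F) (M : ℕ → ℕ → SCTe), TCEdge R Θ f f M → matComp (Trm.piArity (Θ f)) M M = M →
    ∃ i < Trm.piArity (Θ f), M i i = SCTe.minusOne

/-!
Since `ℐ` is the least fixpoint, one can argue by induction on `𝒟 = dom ℐ`: when `T` reduces to
`Πx:A.B`, the claim may be assumed for `A` and for every `B[x ↦ a]` with `a ∈ ℐ(A)`. If the normal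
form of `T` is not a product, `ℐ(T)` is the set of terminating terms. Otherwise `ℐ(T)` is a
dependent product of computability predicates, indexed by `a ∈ ℐ(A)`. Applying a neutral term
creates no redex at the root, so a reduct of `t a` with `t` neutral is `t' a` or `t a'`. In the
second case the index changes from `a` to `a'`, but `B[x ↦ a] →* B[x ↦ a']`, and confluence on
terminating types makes `ℐ` invariant by reduction.
-/

/-! # Renaming, substitution and iterated application -/

namespace Trm

variable {F : Type}

theorem upRen_comp_upRen (τ ρ : ℕ → ℕ) : upRen τ ∘ upRen ρ = upRen (τ ∘ ρ) := by
  funext n; cases n <;> rfl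

theorem rename_rename (t : Trm F) (ρ τ : ℕ → ℕ) :
    rename τ (rename ρ t) = rename (τ ∘ ρ) t := by
  induction t generalizing ρ τ <;> simp_all [rename, upRen_comp_upRen]

theorem up_comp_upRen (σ : ℕ → Trm F) (ρ : ℕ → ℕ) : up σ ∘ upRen ρ = up (σ ∘ ρ) := by
  funext n; cases n <;> rfl

theorem subst_rename (t : Trm F) (ρ : ℕ → ℕ) (σ : ℕ → Trm F) :
    subst σ (rename ρ t) = subst (σ ∘ ρ) t := by
  induction t generalizing ρ σ <;> simp_all [rename, subst, up_comp_upRen]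

theorem rename_upRen_comp_up (ρ : ℕ → ℕ) (σ : ℕ → Trm F) :
    rename (upRen ρ) ∘ up σ = up (rename ρ ∘ σ) := by
  funext n
  cases n with
  | zero => rfl
  | succ n =>
    calc rename (upRen ρ) (rename Nat.succ (σ n))
      _ = rename (Nat.succ ∘ ρ) (σ n) := rename_rename _ _ _
      _ = rename Nat.succ (rename ρ (σ n)) := (rename_rename _ _ _).symm

theorem rename_subst (t : Trm F) (ρ : ℕ → ℕ) (σ : ℕ → Trm F) :
    rename ρ (subst σ t) = subst (rename ρ ∘ σ) t := by
  induction t generalizing ρ σ <;> simp_all [rename, subst, rename_upRen_comp_up]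

theorem rename_subst1 (ρ : ℕ → ℕ) (a b : Trm F) :
    rename ρ (subst1 a b) = subst1 (rename ρ a) (rename (upRen ρ) b) := by
  have h : rename ρ ∘ scons a var = scons (rename ρ a) var ∘ upRen ρ := by
    funext n; cases n <;> rfl
  rw [subst1, subst1, rename_subst, subst_rename, h]

theorem subst_appList (σ : ℕ → Trm F) (h : Trm F) (vs : List (Trm F)) :
    subst σ (appList h vs) = appList (subst σ h) (vs.map (subst σ)) := by
  induction vs generalizing h with
  | nil => rfl
  | cons v _ ih => exact ih (.app h v)

theorem appList_concat (h : Trm F) (vs : List (Trm F)) (a : Trm F) :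
    appList h (vs ++ [a]) = .app (appList h vs) a := by
  induction vs generalizing h with
  | nil => rfl
  | cons v _ ih => exact ih (.app h v)

/-- The head `h` of an iterated application `h t₁ … tₙ`, where `h` is not an application. -/
def head : Trm F → Trm F
  | .app t _ => head t
  | t => t

/-- The number `n` of arguments of an iterated application `h t₁ … tₙ`, where `h` is not an
application. -/
def numArgs : Trm F → ℕ
  | .app t _ => numArgs t + 1
  | _ => 0

theorem head_appList (h : Trm F) (vs : List (Trm F)) : (appList h vs).head = h.head := by
  induction vs generalizing h with
  | nil => rfl
  | cons v _ ih => exact ih (.app h v)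

theorem numArgs_appList (h : Trm F) (vs : List (Trm F)) :
    (appList h vs).numArgs = h.numArgs + vs.length := by
  induction vs generalizing h with
  | nil => rfl
  | cons v vs ih =>
    rw [appList, ih, numArgs, List.length_cons]
    ring

theorem head_subst_appList_sym (σ : ℕ → Trm F) (f : F) (ls : List (Trm F)) :
    (subst σ (appList (.sym f) ls)).head = .sym f := by
  simp only [subst_appList, head_appList, subst, head]

theorem numArgs_subst_appList_sym (σ : ℕ → Trm F) (f : F) (ls : List (Trm F)) :
    (subst σ (appList (.sym f) ls)).numArgs = ls.length := by
  simp only [subst_appList, numArgs_appList, subst, numArgs, List.length_map, zero_add]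

end Trm

/-! # Reduction and termination -/

theorem reflTransGen_of_locallyConfluent_of_acc {α : Type*} {r : α → α → Prop}
    (hconf : ∀ a b c, r a b → r a c → Relation.Join (Relation.ReflTransGen r) b c) {t u v : α}
    (ht : Acc (Function.swap r) t) (hu : Relation.ReflTransGen r t u)
    (hv : Relation.ReflTransGen r t v) (hnf : ∀ w, ¬ r v w) : Relation.ReflTransGen r u v := by
  induction ht generalizing u v with
  | intro t _ ih =>
    rcases hu.cases_head with rfl | ⟨t₁, h₁, hu₁⟩
    · exact hv
    rcases hv.cases_head with rfl | ⟨t₂, h₂, hv₂⟩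
    · exact absurd h₁ (hnf _)
    obtain ⟨w, hw₁, hw₂⟩ := hconf _ _ _ h₁ h₂
    have hwv : Relation.ReflTransGen r w v := ih _ h₂ hw₂ hv₂ hnf
    exact ih _ h₁ hu₁ (hw₁.trans hwv) hnf

section Reduction

variable {F : Type} {R : Rules F}

theorem Red.rename {t u : Trm F} (h : Red R t u) (ρ : ℕ → ℕ) :
    Red R (t.rename ρ) (u.rename ρ) := by
  induction h generalizing ρ with
  | beta A b a => rw [Trm.rename_subst1]; exact .beta _ _ _
  | rule σ h => rw [Trm.rename_subst, Trm.rename_subst]; exact .rule _ h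
  | appL _ ih => exact .appL (ih ρ)
  | appR _ ih => exact .appR (ih ρ)
  | piL _ ih => exact .piL (ih ρ)
  | piR _ ih => exact .piR (ih _)
  | lamL _ ih => exact .lamL (ih ρ)
  | lamR _ ih => exact .lamR (ih _)

theorem RedStar.rename {t u : Trm F} (h : RedStar R t u) (ρ : ℕ → ℕ) :
    RedStar R (t.rename ρ) (u.rename ρ) :=
  Relation.ReflTransGen.lift (Trm.rename ρ) (fun _ _ h => h.rename ρ) _ _ h

theorem RedStar.pi {A A' B B' : Trm F} (hA : RedStar R A A') (hB : RedStar R B B') :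
    RedStar R (.pi A B) (.pi A' B') :=
  (Relation.ReflTransGen.lift (Trm.pi · B) (fun _ _ => .piL) _ _ hA).trans
    (Relation.ReflTransGen.lift (Trm.pi A') (fun _ _ => .piR) _ _ hB)

theorem RedStar.app {t t' u u' : Trm F} (ht : RedStar R t t') (hu : RedStar R u u') :
    RedStar R (.app t u) (.app t' u') :=
  (Relation.ReflTransGen.lift (Trm.app · u) (fun _ _ => .appL) _ _ ht).trans
    (Relation.ReflTransGen.lift (Trm.app t') (fun _ _ => .appR) _ _ hu)

theorem RedStar.lam {A A' b b' : Trm F} (hA : RedStar R A A') (hb : RedStar R b b') :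
    RedStar R (.lam A b) (.lam A' b') :=
  (Relation.ReflTransGen.lift (Trm.lam · b) (fun _ _ => .lamL) _ _ hA).trans
    (Relation.ReflTransGen.lift (Trm.lam A') (fun _ _ => .lamR) _ _ hb)

theorem RedStar.up {σ τ : ℕ → Trm F} (h : ∀ n, RedStar R (σ n) (τ n)) :
    ∀ n, RedStar R (Trm.up σ n) (Trm.up τ n)
  | 0 => .refl
  | n + 1 => (h n).rename Nat.succ

theorem RedStar.subst {σ τ : ℕ → Trm F} (h : ∀ n, RedStar R (σ n) (τ n)) (t : Trm F) :
    RedStar R (t.subst σ) (t.subst τ) := by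
  induction t generalizing σ τ with
  | type | kind | sym => exact .refl
  | var n => exact h n
  | pi A B ihA ihB => exact (ihA h).pi (ihB (RedStar.up h))
  | app t u iht ihu => exact (iht h).app (ihu h)
  | lam A b ihA ihb => exact (ihA h).lam (ihb (RedStar.up h))

theorem RedStar.subst1 {a a' : Trm F} (h : RedStar R a a') (B : Trm F) :
    RedStar R (Trm.subst1 a B) (Trm.subst1 a' B) :=
  RedStar.subst (σ := Trm.scons a .var) (τ := Trm.scons a' .var) (fun | 0 => h | _ + 1 => .refl) B

theorem SN.of_app {t a : Trm F} (h : SN R (.app t a)) : SN R t :=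
  Subrelation.accessible (fun r => Red.appL r) (InvImage.accessible (Trm.app · a) h)

theorem SN.of_redStar {t u : Trm F} (ht : SN R t) (h : RedStar R t u) : SN R u := by
  induction h with
  | refl => exact ht
  | tail _ h ih => exact ih.inv h

theorem NormalForm.eq_of_redStar {t u : Trm F} (ht : NormalForm R t) (h : RedStar R t u) :
    u = t :=
  (Relation.reflTransGen_iff_eq ht).1 h

end Reduction

/-! # Neutral terms and computability predicates -/

section Computability

variable {F : Type} {R : Rules F}

/-- Every left-hand side of `R` is headed by a function symbol, so that variables are in normal form
and an application of a neutral term is not an instance of a left-hand side. -/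
def IsSymHeaded (R : Rules F) : Prop :=
  ∀ l r, (l, r) ∈ R → ∃ (f : F) (ls : List (Trm F)), l = Trm.appList (.sym f) ls

theorem neutral_var (x : ℕ) : Neutral R (.var x) := .inr (.inl ⟨x, [], rfl⟩)

theorem Neutral.app {t : Trm F} (ht : Neutral R t) (a : Trm F) : Neutral R (.app t a) := by
  rcases ht with ⟨A, b, u, vs, rfl⟩ | ⟨x, vs, rfl⟩ | ⟨f, vs, rfl, hf⟩
  · exact .inl ⟨A, b, u, vs ++ [a], (Trm.appList_concat _ _ _).symm⟩
  · exact .inr (.inl ⟨x, vs ++ [a], (Trm.appList_concat _ _ _).symm⟩)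
  · refine .inr (.inr ⟨f, vs ++ [a], (Trm.appList_concat _ _ _).symm, fun ls r h => ?_⟩)
    exact (hf ls r h).trans (List.sublist_append_left vs [a]).length_le

theorem Neutral.ne_lam {t : Trm F} (ht : Neutral R t) (A b : Trm F) : t ≠ .lam A b := by
  rintro rfl
  rcases ht with ⟨A', b', u, vs, h⟩ | ⟨x, vs, h⟩ | ⟨f, vs, h, -⟩
  · have hargs := congrArg Trm.numArgs h
    simp only [Trm.numArgs_appList, Trm.numArgs] at hargs
    omega
  all_goals
    have hhead := congrArg Trm.head h
    rw [Trm.head_appList] at hhead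
    cases hhead

theorem Neutral.app_ne_subst_lhs {t : Trm F} (ht : Neutral R t) (a : Trm F) (σ : ℕ → Trm F)
    {f : F} {ls : List (Trm F)} {r : Trm F} (hlr : (Trm.appList (.sym f) ls, r) ∈ R) :
    .app t a ≠ Trm.subst σ (Trm.appList (.sym f) ls) := by
  intro h
  have hhead : t.head = .sym f :=
    (congrArg Trm.head h).trans (Trm.head_subst_appList_sym σ f ls)
  have hargs : t.numArgs + 1 = ls.length :=
    (congrArg Trm.numArgs h).trans (Trm.numArgs_subst_appList_sym σ f ls)
  rcases ht with ⟨A, b, u, vs, rfl⟩ | ⟨x, vs, rfl⟩ | ⟨g, vs, rfl, hg⟩ <;>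
    rw [Trm.head_appList] at hhead <;> cases hhead
  have hlen : ls.length ≤ vs.length := hg ls r hlr
  simp only [Trm.numArgs_appList, Trm.numArgs] at hargs
  omega

theorem Neutral.red_app (hR : IsSymHeaded R) {t a w : Trm F} (ht : Neutral R t)
    (h : Red R (.app t a) w) :
    (∃ t', Red R t t' ∧ w = .app t' a) ∨ ∃ a', Red R a a' ∧ w = .app t a' := by
  generalize hs : Trm.app t a = s at h
  cases h with
  | appL h => cases hs; exact .inl ⟨_, h, rfl⟩
  | appR h => cases hs; exact .inr ⟨_, h, rfl⟩
  | beta A b c => cases hs; exact absurd rfl (ht.ne_lam A b)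
  | rule σ hlr =>
    obtain ⟨f, ls, rfl⟩ := hR _ _ hlr
    exact absurd hs (ht.app_ne_subst_lhs a σ hlr)
  | _ => cases hs

theorem normalForm_var (hR : IsSymHeaded R) (x : ℕ) : NormalForm R (.var x) := by
  intro u h
  generalize hs : Trm.var x = s at h
  cases h with
  | rule σ hlr =>
    obtain ⟨f, ls, rfl⟩ := hR _ _ hlr
    cases (congrArg Trm.head hs).trans (Trm.head_subst_appList_sym σ f ls)
  | _ => cases hs

theorem IsCompPred.var_mem (hR : IsSymHeaded R) {S : Set (Trm F)} (hS : IsCompPred R S) (x : ℕ) :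
    .var x ∈ S :=
  hS.2.2 _ (neutral_var x) fun u h => absurd h (normalForm_var hR x u)

theorem isCompPred_SNset : IsCompPred R (SNset R) :=
  ⟨subset_rfl, fun _ ht _ h => ht.inv h, fun _ _ h => Acc.intro _ h⟩

/-- The dependent product of a family `C` of sets of terms over a set of terms `S`. -/
def depProd (S : Set (Trm F)) (C : Trm F → Set (Trm F)) : Set (Trm F) :=
  {t | ∀ a ∈ S, .app t a ∈ C a}

theorem isCompPred_depProd (hR : IsSymHeaded R) {S : Set (Trm F)} {C : Trm F → Set (Trm F)}
    (hS : IsCompPred R S) (hC : ∀ a ∈ S, IsCompPred R (C a))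
    (hCred : ∀ a ∈ S, ∀ a', Red R a a' → C a' ⊆ C a) : IsCompPred R (depProd S C) := by
  refine ⟨fun t ht => ?sn, fun t ht u htu a ha => ?red, fun t hn ht a ha => ?neutral⟩
  case sn =>
    have hx : .var 0 ∈ S := hS.var_mem hR 0
    exact SN.of_app ((hC _ hx).1 (ht _ hx))
  case red => exact (hC a ha).2.1 _ (ht a ha) _ (.appL htu)
  case neutral =>
    have hsn : SN R a := hS.1 ha
    induction hsn with
    | intro a _ ih =>
      refine (hC a ha).2.2 _ (hn.app a) fun w hw => ?_
      rcases hn.red_app hR hw with ⟨t', htt', rfl⟩ | ⟨a', haa', rfl⟩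
      · exact ht t' htt' a ha
      · have ha' : a' ∈ S := hS.2.1 a ha a' haa'
        exact hCred a ha a' haa' (ih a' haa' ha')

end Computability

/-! # Least fixpoints of monotone functions on partial interpretations -/

section LeastFixpoint

variable {F : Type} {I J : Interp F}

theorem Interp.eq_of_le_of_dom (h : I ≤ J) {T : Trm F} (hT : (I T).Dom) : I T = J T :=
  have hmem : (I T).get hT ∈ I T := Part.get_mem hT
  (Part.eq_some_iff.2 hmem).trans (Part.eq_some_iff.2 (h T _ hmem)).symm

theorem Interp.dom_of_le (h : I ≤ J) {T : Trm F} (hT : (I T).Dom) : (J T).Dom :=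
  eq_of_le_of_dom h hT ▸ hT

/-- Restriction of a partial interpretation to a set of terms `X`. Unlike in `PFun.restrict`, `X`
need not be contained in the domain. -/
def Interp.restrict (I : Interp F) (X : Set (Trm F)) : Interp F :=
  fun T => Part.assert (T ∈ X) fun _ => I T

theorem Interp.mem_restrict {X : Set (Trm F)} {T : Trm F} {S : Set (Trm F)} :
    S ∈ I.restrict X T ↔ T ∈ X ∧ S ∈ I T :=
  Part.mem_assert_iff.trans exists_prop

theorem Interp.restrict_dom {X : Set (Trm F)} {T : Trm F} :
    (I.restrict X T).Dom ↔ T ∈ X ∧ (I T).Dom :=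
  exists_prop

theorem Interp.restrict_le (X : Set (Trm F)) : I.restrict X ≤ I :=
  fun _ _ hS => (mem_restrict.1 hS).2

theorem Interp.restrict_mono : Monotone I.restrict :=
  fun _ _ hXY _ _ hS => mem_restrict.2 ⟨hXY (mem_restrict.1 hS).1, (mem_restrict.1 hS).2⟩

theorem IsLfpInterp.mem_of_dom {φ : Interp F → Interp F} (hI : IsLfpInterp φ I)
    (hφ : Monotone φ) {X : Set (Trm F)} (hX : ∀ T, (φ (I.restrict X) T).Dom → T ∈ X) {T : Trm F}
    (hT : (I T).Dom) : T ∈ X := by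
  -- Partial functions do not form a complete lattice, but sets do: for the least `Y` with
  -- `dom (φ (I|Y)) = Y`, the restriction `I|Y` is a fixpoint of `φ`, hence contains `I`.
  let ψ : Set (Trm F) →o Set (Trm F) :=
    ⟨fun Y => {T | (φ (I.restrict Y) T).Dom},
      fun _ _ hYZ _ hT => Interp.dom_of_le (hφ (Interp.restrict_mono hYZ)) hT⟩
  have hψ (T : Trm F) : (φ (I.restrict ψ.lfp) T).Dom ↔ T ∈ ψ.lfp :=
    Set.ext_iff.1 ψ.map_lfp T
  have hle : φ (I.restrict ψ.lfp) ≤ I := (hφ (Interp.restrict_le _)).trans_eq hI.1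
  have hfix : φ (I.restrict ψ.lfp) = I.restrict ψ.lfp := by
    funext T
    refine Part.ext fun S => ⟨fun hS => ?_, fun hS => ?_⟩
    · exact Interp.mem_restrict.2 ⟨(hψ T).1 (Part.dom_iff_mem.2 ⟨S, hS⟩), hle T S hS⟩
    · obtain ⟨hT, hS⟩ := Interp.mem_restrict.1 hS
      rwa [Interp.eq_of_le_of_dom hle ((hψ T).2 hT)]
  have hT' : T ∈ ψ.lfp :=
    (Interp.mem_restrict.1 (hI.2 _ hfix T _ (Part.get_mem hT))).1
  exact ψ.lfp_le hX hT'

end LeastFixpoint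

/-! # The interpretation functional -/

section InterpretationFunctional

variable {F : Type} {R : Rules F} {I J : Interp F}

/-- `Πx:A.B` is a normal form of `T`. -/
def HasPiNormalForm (R : Rules F) (T A B : Trm F) : Prop :=
  RedStar R T (.pi A B) ∧ NormalForm R (.pi A B)

theorem domD_mono : Monotone (domD R) := fun I J h T hT =>
  ⟨hT.1, fun A B hAB => by
    obtain ⟨hA, hB⟩ := hT.2 A B hAB
    rw [← Interp.eq_of_le_of_dom h hA]
    exact ⟨hA, fun S hS a ha => Interp.dom_of_le h (hB S hS a ha)⟩⟩

theorem piPart_eq_of_le (h : I ≤ J) {A B : Trm F} (hA : (I A).Dom)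
    (hB : ∀ S ∈ I A, ∀ a ∈ S, (I (Trm.subst1 a B)).Dom) : piPart I A B = piPart J A B := by
  ext t
  simp only [piPart, Set.mem_ofPred_eq, ← Interp.eq_of_le_of_dom h hA]
  refine forall₄_congr fun S hS a ha => ?_
  rw [Interp.eq_of_le_of_dom h (hB S hS a ha)]

theorem interpF_mono : Monotone (interpF R) := by
  rintro I J h T S ⟨hT, rfl⟩
  refine ⟨domD_mono h hT, ?_⟩
  dsimp only [interpF]
  split_ifs with hpi
  · obtain ⟨hA, hB⟩ := hT.2 _ _ hpi.choose_spec.choose_spec.1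
    exact (piPart_eq_of_le h hA hB).symm
  · rfl

theorem mem_domD_of_redStar {T T' : Trm F} (hT : T ∈ domD R I) (h : RedStar R T T') :
    T' ∈ domD R I :=
  ⟨hT.1.of_redStar h, fun A B hAB => hT.2 A B (h.trans hAB)⟩

theorem HasPiNormalForm.of_redStar (hconf : LocallyConfluent R) {T T' A B : Trm F}
    (hT : SN R T) (h : RedStar R T T') (hAB : HasPiNormalForm R T A B) :
    HasPiNormalForm R T' A B :=
  ⟨reflTransGen_of_locallyConfluent_of_acc hconf hT h hAB.1 hAB.2, hAB.2⟩

theorem HasPiNormalForm.unique (hconf : LocallyConfluent R) {T A B A' B' : Trm F} (hT : SN R T)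
    (hAB : HasPiNormalForm R T A B) (hAB' : HasPiNormalForm R T A' B') : A = A' ∧ B = B' :=
  Trm.pi.inj (hAB'.2.eq_of_redStar (hAB.of_redStar hconf hT hAB'.1).1)

theorem interpF_eq_SNset {T : Trm F} (hT : T ∈ domD R I)
    (h : ¬ ∃ A B, HasPiNormalForm R T A B) : interpF R I T = Part.some (SNset R) :=
  Part.eq_some_iff.2 ⟨hT, dif_neg h⟩

theorem interpF_eq_piPart (hconf : LocallyConfluent R) {T A B : Trm F} (hT : T ∈ domD R I)
    (hAB : HasPiNormalForm R T A B) : interpF R I T = Part.some (piPart I A B) := by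
  have hpi : ∃ A B, HasPiNormalForm R T A B := ⟨A, B, hAB⟩
  obtain ⟨hA, hB⟩ := hAB.unique hconf hT.1 hpi.choose_spec.choose_spec
  exact Part.eq_some_iff.2 ⟨hT, (dif_pos hpi).trans (congrArg₂ (piPart I) hA.symm hB.symm)⟩

theorem interpF_eq_of_redStar (hconf : LocallyConfluent R) {T T' : Trm F} (hT : T ∈ domD R I)
    (h : RedStar R T T') : interpF R I T' = interpF R I T := by
  have hT' : T' ∈ domD R I := mem_domD_of_redStar hT h
  by_cases hpi : ∃ A B, HasPiNormalForm R T A B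
  · obtain ⟨A, B, hAB⟩ := hpi
    rw [interpF_eq_piPart hconf hT hAB, interpF_eq_piPart hconf hT' (hAB.of_redStar hconf hT.1 h)]
  · have hpi' : ¬ ∃ A B, HasPiNormalForm R T' A B :=
      fun ⟨A, B, hAB⟩ => hpi ⟨A, B, h.trans hAB.1, hAB.2⟩
    rw [interpF_eq_SNset hT hpi, interpF_eq_SNset hT' hpi']

theorem mem_domD_iff_dom (hI : interpF R I = I) {T : Trm F} : T ∈ domD R I ↔ (I T).Dom :=
  Iff.of_eq (congrArg (fun K : Interp F => (K T).Dom) hI)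

theorem IsLfpInterp.domD_induction (hI : IsLfpInterp (interpF R) I) {P : Trm F → Prop}
    (step : ∀ T ∈ domD R I, (∀ A B, RedStar R T (.pi A B) →
      P A ∧ ∀ S ∈ I A, ∀ a ∈ S, P (Trm.subst1 a B)) → P T) :
    ∀ T ∈ domD R I, P T := by
  intro T hT
  refine hI.mem_of_dom interpF_mono (X := {T | P T}) (fun T hT => ?_)
    ((mem_domD_iff_dom hI.1).1 hT)
  replace hT : T ∈ domD R (I.restrict {T | P T}) := hT
  refine step T (domD_mono (Interp.restrict_le _) hT) fun A B hAB => ?_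
  obtain ⟨hA, hB⟩ := hT.2 A B hAB
  have hPA : P A := (Interp.restrict_dom.1 hA).1
  exact ⟨hPA, fun S hS a ha =>
    (Interp.restrict_dom.1 (hB S (Interp.mem_restrict.2 ⟨hPA, hS⟩) a ha)).1⟩

theorem partMem_eq_of_mem {T : Trm F} {S : Set (Trm F)} (hS : S ∈ I T) : partMem I T = S := by
  ext t
  exact ⟨fun ht => ht S hS, fun ht S' hS' => Part.mem_unique hS hS' ▸ ht⟩

theorem piPart_eq_depProd {A B : Trm F} {S : Set (Trm F)} (hS : S ∈ I A) :
    piPart I A B = depProd S fun a => partMem I (Trm.subst1 a B) := by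
  ext t
  exact ⟨fun ht => ht S hS, fun ht S' hS' => Part.mem_unique hS hS' ▸ ht⟩

theorem isCompPred_piPart (hR : IsSymHeaded R) (hconf : LocallyConfluent R)
    (hI : interpF R I = I) {A B : Trm F} (hA : (I A).Dom)
    (hB : ∀ S ∈ I A, ∀ a ∈ S, (I (Trm.subst1 a B)).Dom)
    (hcompA : ∀ S ∈ I A, IsCompPred R S)
    (hcompB : ∀ S ∈ I A, ∀ a ∈ S, ∀ S' ∈ I (Trm.subst1 a B), IsCompPred R S') :
    IsCompPred R (piPart I A B) := by
  obtain ⟨S, hS⟩ := Part.dom_iff_mem.1 hA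
  rw [piPart_eq_depProd hS]
  refine isCompPred_depProd hR (hcompA S hS) (fun a ha => ?_) fun a ha a' haa' => ?_
  · obtain ⟨S', hS'⟩ := Part.dom_iff_mem.1 (hB S hS a ha)
    rw [partMem_eq_of_mem hS']
    exact hcompB S hS a ha S' hS'
  · have hBa : Trm.subst1 a B ∈ domD R I := (mem_domD_iff_dom hI).2 (hB S hS a ha)
    have hinv : I (Trm.subst1 a' B) = I (Trm.subst1 a B) := by
      rw [← hI]
      exact interpF_eq_of_redStar hconf (hI.symm ▸ hBa) (RedStar.subst1 (.single haa') B)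
    rw [partMem, partMem, hinv]

end InterpretationFunctional

theorem calI_comp_pred_general {F : Type} (R : Rules F) (hR : IsSymHeaded R)
    (hconf : LocallyConfluent R) (calI : Interp F) (hlfp : IsLfpInterp (interpF R) calI) :
    ∀ T ∈ domD R calI, ∀ S ∈ calI T, IsCompPred R S := by
  refine hlfp.domD_induction fun T hT ih S hS => ?_
  rw [← hlfp.1] at hS
  by_cases hpi : ∃ A B, HasPiNormalForm R T A B
  · obtain ⟨A, B, hAB⟩ := hpi
    obtain ⟨hA, hB⟩ := hT.2 A B hAB.1
    obtain ⟨hcompA, hcompB⟩ := ih A B hAB.1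
    rw [interpF_eq_piPart hconf hT hAB, Part.mem_some_iff] at hS
    rw [hS]
    exact isCompPred_piPart hR hconf hlfp.1 hA hB hcompA hcompB
  · rw [interpF_eq_SNset hT hpi, Part.mem_some_iff] at hS
    rw [hS]
    exact isCompPred_SNset

/-- Lemma 18 of the appendix. For every `T ∈ 𝒟`, the set `ℐ(T)` is a
computability predicate. -/
theorem calI_comp_pred {F : Type} (R : Rules F)
    (hRS : IsRewriteSystem R)
    (hconf : LocallyConfluent R)
    (calI : Interp F) (hlfp : IsLfpInterp (interpF R) calI) :
    ∀ T ∈ domD R calI, ∀ S ∈ calI T, IsCompPred R S :=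
  calI_comp_pred_general R (fun l r hlr => (hRS (l, r) hlr).2) hconf calI hlfp
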